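/- arXiv:2508.05942 — 2 statements merged into one kernel-verified Lean document; each statement's English description precedes it below -/
import Mathlib

section
/- For any integer b ≥ 2, there exist infinitely many positive integers t such that the b-Cullen number t·b^t + 1 is a b-Riesel number. -/
/-- An integer `m` is composite if `m > 1` and `m` is not prime. -/
def IsComposite (m : ℤ) : Prop := 1 < m ∧ ¬ Prime m

/-- `k` is a `b`-Sierpiński number: a positive integer with `gcd (k+1) (b-1) = 1`
such that `k * b ^ n + 1` is composite for all positive integers `n`. -/
def IsBSierpinski (b k : ℤ) : Prop :=
  0 < k ∧ Int.gcd (k + 1) (b - 1) = 1 ∧ ∀ n : ℕ, 0 < n → IsComposite (k * b ^ n + 1)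

/-- `k` is a `b`-Riesel number: a positive integer with `gcd (k-1) (b-1) = 1`
such that `k * b ^ n - 1` is composite for all positive integers `n`. -/
def IsBRiesel (b k : ℤ) : Prop :=
  0 < k ∧ Int.gcd (k - 1) (b - 1) = 1 ∧ ∀ n : ℕ, 0 < n → IsComposite (k * b ^ n - 1)

/-- `k` is a `b`-Brier number: both `b`-Sierpiński and `b`-Riesel. -/
def IsBBrier (b k : ℤ) : Prop := IsBSierpinski b k ∧ IsBRiesel b k


/-- Powers of `b` only depend on the exponent modulo a period. -/
lemma pow_congr_of_period (b : ℤ) (p m s t : ℕ) (hbm : b ^ m ≡ 1 [ZMOD p])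
    (ht : t ≡ s [MOD m]) : b ^ t ≡ b ^ s [ZMOD p] := by
  have key : ∀ u : ℕ, b ^ u ≡ b ^ (u % m) [ZMOD p] := by
    intro u
    conv_lhs => rw [← Nat.div_add_mod u m, pow_add, pow_mul]
    have := (hbm.pow (u / m)).mul_right (b ^ (u % m))
    simpa using this
  have h1 := key t
  rw [ht] at h1
  exact h1.trans (key s).symm

lemma dvd_core (b : ℤ) (p m s c r t n : ℕ) (hbm : b ^ m ≡ 1 [ZMOD p])
    (ht : t ≡ s [MOD m]) (hc : t ≡ c [MOD p]) (hn : n ≡ r [MOD m])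
    (h : ((c : ℤ) * b ^ s + 1) * b ^ r ≡ 1 [ZMOD p]) :
    (p : ℤ) ∣ ((t : ℤ) * b ^ t + 1) * b ^ n - 1 := by
  have h1 := pow_congr_of_period b p m s t hbm ht
  have h2 := pow_congr_of_period b p m r n hbm hn
  have h3 : (t : ℤ) ≡ c [ZMOD p] := (Int.natCast_modEq_iff).2 hc
  have h4 := (((h3.mul h1).add_right 1).mul h2).trans h
  exact (Int.modEq_iff_dvd.1 h4.symm)

lemma finish_riesel (b : ℤ) (hb : 2 ≤ b) (D : ℕ) (T : Set ℕ) (hT : T.Infinite)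
    (hg : ∀ t ∈ T, IsCoprime (t : ℤ) (b - 1))
    (hd : ∀ t ∈ T, ∀ n : ℕ, ∃ p : ℕ, 2 ≤ p ∧ p ≤ D ∧
      (p : ℤ) ∣ ((t : ℤ) * b ^ t + 1) * b ^ n - 1) :
    {t : ℕ | 0 < t ∧ IsBRiesel b ((t : ℤ) * b ^ t + 1)}.Infinite := by
  refine (hT.sdiff (Set.finite_Iic D)).mono ?_
  rintro t ⟨htT, htD⟩
  have htD : D < t := by simpa using htD
  have ht0 : 0 < t := by omega
  have ht0' : (0 : ℤ) < t := by exact_mod_cast ht0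
  refine ⟨ht0, by positivity, ?_, ?_⟩
  · rw [← Int.isCoprime_iff_gcd_eq_one, add_sub_cancel_right]
    refine IsCoprime.mul_left (hg t htT) (IsCoprime.pow_left ⟨1, -1, by ring⟩)
  · intro n hn
    obtain ⟨p, hp2, hpD, hdv⟩ := hd t htT n
    have h1 : (1 : ℤ) ≤ b ^ t := one_le_pow₀ (by omega)
    have h2 : (2 : ℤ) ≤ b ^ n := by
      calc (2 : ℤ) ≤ b := hb
        _ = b ^ 1 := (pow_one b).symm
        _ ≤ b ^ n := pow_le_pow_right₀ (by omega) hn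
    have h3 : (t : ℤ) + 1 ≤ (t : ℤ) * b ^ t + 1 := by nlinarith
    have h4 : (t : ℤ) < ((t : ℤ) * b ^ t + 1) * b ^ n - 1 := by nlinarith
    refine ⟨by omega, fun hpr => ?_⟩
    set x := ((t : ℤ) * b ^ t + 1) * b ^ n - 1 with hx
    have h5 := Int.prime_iff_natAbs_prime.1 hpr
    have h6 : p ∣ x.natAbs := Int.natCast_dvd.1 hdv
    rcases (Nat.dvd_prime h5).1 h6 with h | h <;> omega

lemma infinite_class (N P a c : ℕ) (hN : 0 < N) (hP : 0 < P) (h : Nat.Coprime N P) :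
    {t : ℕ | t ≡ a [MOD N] ∧ t ≡ c [MOD P]}.Infinite := by
  obtain ⟨t0, h1, h2⟩ := Nat.chineseRemainder h a c
  refine Set.infinite_of_injective_forall_mem (f := fun j : ℕ => t0 + N * P * j) ?_ ?_
  · intro i j hij
    have : N * P * i = N * P * j := by simpa using hij
    exact Nat.eq_of_mul_eq_mul_left (by positivity) this
  · intro j
    constructor
    · have : t0 + N * P * j ≡ t0 [MOD N] := by
        simp [Nat.ModEq, mul_assoc]
      exact this.trans h1
    · have : t0 + N * P * j ≡ t0 [MOD P] := by
        rw [mul_comm N P]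
        simp [Nat.ModEq, mul_assoc]
      exact this.trans h2

/-- The covering argument. -/
lemma covering_riesel (b : ℕ) (hb : 2 ≤ b) (L : ℕ) (hL : 0 < L) (S : Finset ℕ)
    (r p : ℕ → ℕ)
    (hp : ∀ m ∈ S, (p m).Prime) (hmL : ∀ m ∈ S, m ∣ L) (hm1 : ∀ m ∈ S, 1 < m)
    (hpL : ∀ m ∈ S, ¬ p m ∣ L)
    (hord : ∀ m ∈ S, orderOf (b : ZMod (p m)) = m)
    (hcov : ∀ n : ℕ, ∃ m ∈ S, n % m = r m) :
    {t : ℕ | 0 < t ∧ IsBRiesel (b : ℤ) ((t : ℤ) * (b : ℤ) ^ t + 1)}.Infinite := by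
  have hinj : ∀ m ∈ S, ∀ m' ∈ S, p m = p m' → m = m' := by
    intro m hm m' hm' h
    rw [← hord m hm, ← hord m' hm', h]
  have hpb : ∀ m ∈ S, ¬ p m ∣ b - 1 := by
    intro m hm hd
    have h1 : ((b - 1 : ℕ) : ZMod (p m)) = 0 := (ZMod.natCast_eq_zero_iff _ _).2 hd
    rw [Nat.cast_sub (by omega), sub_eq_zero] at h1
    have h2 := hord m hm
    rw [h1, Nat.cast_one, orderOf_one] at h2
    have := hm1 m hm
    omega
  have hc : ∀ m ∈ S, ∃ c : ℕ,
      ((c : ℤ) * (b : ℤ) ^ (L - 1) + 1) * (b : ℤ) ^ (r m) ≡ 1 [ZMOD (p m)] := by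
    intro m hm
    have : Fact (p m).Prime := ⟨hp m hm⟩
    have hb0 : (b : ZMod (p m)) ≠ 0 := by
      intro h0
      have h1 := pow_orderOf_eq_one (b : ZMod (p m))
      have := hm1 m hm
      rw [hord m hm, h0, zero_pow (by omega)] at h1
      exact zero_ne_one h1
    refine ⟨((((b : ZMod (p m)) ^ (r m))⁻¹ - 1) * ((b : ZMod (p m)) ^ (L - 1))⁻¹).val, ?_⟩
    rw [← ZMod.intCast_eq_intCast_iff]
    push_cast
    rw [ZMod.natCast_zmod_val]
    field_simp
    ring
  choose! c hc using hc
  obtain ⟨t1, ht1⟩ := Nat.chineseRemainderOfFinset c p S (fun m hm => (hp m hm).ne_zero) (by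
    intro m hm m' hm' hne
    exact (Nat.coprime_primes (hp m hm) (hp m' hm')).2 fun h => hne (hinj m hm m' hm' h))
  have hcop : Nat.Coprime (L * (b - 1)) (∏ m ∈ S, p m) := by
    refine Nat.Coprime.prod_right fun m hm => ?_
    refine Nat.Coprime.symm (((hp m hm).coprime_iff_not_dvd).2 ?_)
    rw [(hp m hm).dvd_mul]
    rintro (h | h)
    exacts [hpL m hm h, hpb m hm h]
  have hNpos : 0 < L * (b - 1) := Nat.mul_pos hL (by omega)
  refine finish_riesel b (by exact_mod_cast hb) (∏ m ∈ S, p m) _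
    (infinite_class (L * (b - 1)) (∏ m ∈ S, p m) (L * (b - 1) - 1) t1 hNpos
      (Finset.prod_pos fun m hm => (hp m hm).pos) hcop) ?_ ?_
  · rintro t ⟨ht, -⟩
    have h1 : t + 1 ≡ 0 [MOD (L * (b - 1))] := by
      have := ht.add_right 1
      rw [Nat.sub_add_cancel hNpos] at this
      exact this.trans (by simp [Nat.ModEq])
    have h2 : (b - 1) ∣ t + 1 := (Dvd.intro_left L rfl).trans ((Nat.modEq_zero_iff_dvd).1 h1)
    obtain ⟨k, hk⟩ := h2
    have hk' : (t : ℤ) + 1 = ((b : ℤ) - 1) * k := by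
      have : ((t + 1 : ℕ) : ℤ) = (((b - 1) * k : ℕ) : ℤ) := by rw [hk]
      rw [Nat.cast_mul, Nat.cast_sub (by omega)] at this
      exact_mod_cast this
    exact ⟨-1, k, by linarith⟩
  · rintro t ⟨ht, ht'⟩ n
    obtain ⟨m, hm, hn⟩ := hcov n
    have hdvd : p m ∣ ∏ m ∈ S, p m := Finset.dvd_prod_of_mem p hm
    refine ⟨p m, (hp m hm).two_le,
      Nat.le_of_dvd (Finset.prod_pos fun m hm => (hp m hm).pos) hdvd, ?_⟩
    refine dvd_core b (p m) m (L - 1) (c m) (r m) t n ?_ ?_ ?_ ?_ (hc m hm)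
    · rw [← ZMod.intCast_eq_intCast_iff]
      push_cast
      have := pow_orderOf_eq_one (b : ZMod (p m))
      rwa [hord m hm] at this
    · have h1 : t ≡ L * (b - 1) - 1 [MOD m] := ht.of_dvd ((hmL m hm).mul_right _)
      refine h1.trans (Nat.ModEq.add_right_cancel' 1 ?_)
      rw [Nat.sub_add_cancel hNpos, Nat.sub_add_cancel hL]
      exact ((Nat.modEq_zero_iff_dvd).2 ((hmL m hm).mul_right _)).trans
        ((Nat.modEq_zero_iff_dvd).2 (hmL m hm)).symm
    · exact (ht'.of_dvd hdvd).trans (ht1 m hm)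
    · have h1 : n % m % m = r m % m := by rw [hn]
      rwa [Nat.mod_mod] at h1

lemma exists_prime_A (x : ℕ) (hx : 2 ≤ x) : ∃ p : ℕ, p.Prime ∧ p ≠ 2 ∧ p ≠ 3 ∧ p ∣ x ^ 2 + 1 := by
  have h3 : ¬ 3 ∣ x ^ 2 + 1 := by
    rw [Nat.dvd_iff_mod_eq_zero, Nat.add_mod, Nat.pow_mod]
    have : x % 3 < 3 := Nat.mod_lt _ (by norm_num)
    interval_cases x % 3 <;> simp
  have h4 : ¬ 4 ∣ x ^ 2 + 1 := by
    rw [Nat.dvd_iff_mod_eq_zero, Nat.add_mod, Nat.pow_mod]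
    have : x % 4 < 4 := Nat.mod_lt _ (by norm_num)
    interval_cases x % 4 <;> simp
  have hbig : 4 < x ^ 2 + 1 := by nlinarith
  by_cases h2 : 2 ∣ x ^ 2 + 1
  · obtain ⟨k, hk⟩ := h2
    obtain ⟨p, hp, hpk⟩ := Nat.exists_prime_and_dvd (n := k) (by omega)
    refine ⟨p, hp, ?_, ?_, hpk.trans (Dvd.intro_left 2 hk.symm)⟩
    · rintro rfl
      obtain ⟨j, rfl⟩ := hpk
      exact h4 ⟨j, by rw [hk]; ring⟩
    · rintro rfl
      exact h3 (hpk.trans (Dvd.intro_left 2 hk.symm))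
  · obtain ⟨p, hp, hpk⟩ := Nat.exists_prime_and_dvd (n := x ^ 2 + 1) (by omega)
    exact ⟨p, hp, by rintro rfl; exact h2 hpk, by rintro rfl; exact h3 hpk, hpk⟩

lemma exists_prime_B (x : ℕ) (hx : 2 ≤ x) :
    ∃ p : ℕ, p.Prime ∧ p ≠ 2 ∧ p ≠ 3 ∧ p ∣ x ^ 2 + x + 1 := by
  have h2 : ¬ 2 ∣ x ^ 2 + x + 1 := by
    rw [Nat.dvd_iff_mod_eq_zero, Nat.add_mod, Nat.add_mod (x ^ 2), Nat.pow_mod]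
    have : x % 2 < 2 := Nat.mod_lt _ (by norm_num)
    interval_cases x % 2 <;> simp
  have h9 : ¬ 9 ∣ x ^ 2 + x + 1 := by
    rw [Nat.dvd_iff_mod_eq_zero, Nat.add_mod, Nat.add_mod (x ^ 2), Nat.pow_mod]
    have : x % 9 < 9 := Nat.mod_lt _ (by norm_num)
    interval_cases x % 9 <;> simp
  have hbig : 6 < x ^ 2 + x + 1 := by nlinarith
  by_cases h3 : 3 ∣ x ^ 2 + x + 1
  · obtain ⟨k, hk⟩ := h3
    obtain ⟨p, hp, hpk⟩ := Nat.exists_prime_and_dvd (n := k) (by omega)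
    refine ⟨p, hp, ?_, ?_, hpk.trans (Dvd.intro_left 3 hk.symm)⟩
    · rintro rfl
      exact h2 (hpk.trans (Dvd.intro_left 3 hk.symm))
    · rintro rfl
      obtain ⟨j, rfl⟩ := hpk
      exact h9 ⟨j, by rw [hk]; ring⟩
  · obtain ⟨p, hp, hpk⟩ := Nat.exists_prime_and_dvd (n := x ^ 2 + x + 1) (by omega)
    exact ⟨p, hp, by rintro rfl; exact h2 hpk, by rintro rfl; exact h3 hpk, hpk⟩

lemma natCast_ne_zero_of_prime (p q : ℕ) (hp : p.Prime) (hq : q.Prime) (h : p ≠ q) :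
    (q : ZMod p) ≠ 0 := by
  rw [Ne, ZMod.natCast_eq_zero_iff]
  exact fun hd => h ((Nat.prime_dvd_prime_iff_eq hp hq).1 hd)

/-- Primes for which `b` has order `2 ^ (a + 2)`. -/
lemma order_A (b a : ℕ) (hb : 3 ≤ b) :
    ∃ p : ℕ, p.Prime ∧ p ≠ 2 ∧ p ≠ 3 ∧ orderOf (b : ZMod p) = 2 ^ (a + 2) := by
  obtain ⟨p, hp, h2, h3, hd⟩ := exists_prime_A (b ^ 2 ^ a)
    ((by omega : 2 ≤ b).trans (Nat.le_self_pow (by positivity) b))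
  refine ⟨p, hp, h2, h3, ?_⟩
  have : Fact p.Prime := ⟨hp⟩
  have e2 : (2 : ZMod p) ≠ 0 := by exact_mod_cast natCast_ne_zero_of_prime p 2 hp Nat.prime_two h2
  have h := (ZMod.natCast_eq_zero_iff _ _).2 hd
  push_cast at h
  have h' : (b : ZMod p) ^ 2 ^ (a + 1) = -1 := by
    rw [pow_succ, pow_mul]; linear_combination h
  refine orderOf_eq_prime_pow (p := 2) ?_ ?_
  · rw [h']
    intro h1
    exact e2 (by linear_combination -h1)
  · rw [pow_succ, pow_mul, h']; norm_num

/-- Primes for which `b` has order `3 ^ (a + 1)`. -/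
lemma order_B (b a : ℕ) (hb : 3 ≤ b) :
    ∃ p : ℕ, p.Prime ∧ p ≠ 2 ∧ p ≠ 3 ∧ orderOf (b : ZMod p) = 3 ^ (a + 1) := by
  obtain ⟨p, hp, h2, h3, hd⟩ := exists_prime_B (b ^ 3 ^ a)
    ((by omega : 2 ≤ b).trans (Nat.le_self_pow (by positivity) b))
  refine ⟨p, hp, h2, h3, ?_⟩
  have : Fact p.Prime := ⟨hp⟩
  have e3 : (3 : ZMod p) ≠ 0 := by
    exact_mod_cast natCast_ne_zero_of_prime p 3 hp Nat.prime_three h3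
  have h := (ZMod.natCast_eq_zero_iff _ _).2 hd
  push_cast at h
  refine orderOf_eq_prime_pow (p := 3) ?_ ?_
  · intro h1
    rw [h1] at h
    exact e3 (by linear_combination h)
  · rw [pow_succ, pow_mul]
    linear_combination ((b : ZMod p) ^ 3 ^ a - 1) * h

/-- Primes for which `b` has order `2 ^ (a + 1) * 3 ^ (c + 1)`. -/
lemma order_C (b a c : ℕ) (hb : 3 ≤ b) :
    ∃ p : ℕ, p.Prime ∧ p ≠ 2 ∧ p ≠ 3 ∧ orderOf (b : ZMod p) = 2 ^ (a + 1) * 3 ^ (c + 1) := by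
  have hx : 3 ≤ b ^ (2 ^ a * 3 ^ c) := hb.trans (Nat.le_self_pow (by positivity) b)
  obtain ⟨z, hz⟩ : ∃ z, b ^ (2 ^ a * 3 ^ c) = z + 1 := ⟨_, (Nat.sub_add_cancel (by omega)).symm⟩
  obtain ⟨p, hp, h2, h3, hd⟩ := exists_prime_B z (by omega)
  refine ⟨p, hp, h2, h3, ?_⟩
  have : Fact p.Prime := ⟨hp⟩
  have e2 : (2 : ZMod p) ≠ 0 := by exact_mod_cast natCast_ne_zero_of_prime p 2 hp Nat.prime_two h2
  have e3 : (3 : ZMod p) ≠ 0 := by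
    exact_mod_cast natCast_ne_zero_of_prime p 3 hp Nat.prime_three h3
  have h := (ZMod.natCast_eq_zero_iff _ _).2 hd
  push_cast at h
  have hz' : (b : ZMod p) ^ (2 ^ a * 3 ^ c) = z + 1 := by exact_mod_cast congrArg (Nat.cast) hz
  refine orderOf_eq_of_pow_and_pow_div_prime (by positivity) ?_ ?_
  · have : 2 ^ (a + 1) * 3 ^ (c + 1) = (2 ^ a * 3 ^ c) * 6 := by ring
    rw [this, pow_mul, hz']
    linear_combination ((z : ZMod p) + 2) * z * ((z + 1) ^ 2 + (z + 1) + 1) * h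
  · intro q hq hqd
    rcases (hq.dvd_mul).1 hqd with hh | hh
    · have : q = 2 := (Nat.prime_dvd_prime_iff_eq hq Nat.prime_two).1 (hq.dvd_of_dvd_pow hh)
      subst this
      have : 2 ^ (a + 1) * 3 ^ (c + 1) / 2 = (2 ^ a * 3 ^ c) * 3 := by
        apply Nat.div_eq_of_eq_mul_left (by norm_num); ring
      rw [this, pow_mul, hz']
      intro h1
      exact e2 (by linear_combination ((z : ZMod p) + 2) * h - h1)
    · have : q = 3 := (Nat.prime_dvd_prime_iff_eq hq Nat.prime_three).1 (hq.dvd_of_dvd_pow hh)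
      subst this
      have : 2 ^ (a + 1) * 3 ^ (c + 1) / 3 = (2 ^ a * 3 ^ c) * 2 := by
        apply Nat.div_eq_of_eq_mul_left (by norm_num); ring
      rw [this, pow_mul, hz']
      intro h1
      have hz1 : (z : ZMod p) = 1 := by linear_combination h1 - h
      rw [hz1] at h
      exact e3 (by linear_combination h)

lemma cullen_riesel_ge_three (b : ℕ) (hb : 3 ≤ b) :
    {t : ℕ | 0 < t ∧ IsBRiesel (b : ℤ) ((t : ℤ) * (b : ℤ) ^ t + 1)}.Infinite := by
  have hex : ∀ m ∈ ({3, 4, 6, 8, 9, 12, 16, 18, 24, 36, 48, 144} : Finset ℕ),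
      ∃ p : ℕ, p.Prime ∧ p ≠ 2 ∧ p ≠ 3 ∧ orderOf (b : ZMod p) = m := by
    intro m hm
    simp only [Finset.mem_insert, Finset.mem_singleton] at hm
    rcases hm with rfl | rfl | rfl | rfl | rfl | rfl | rfl | rfl | rfl | rfl | rfl | rfl
    · exact order_B b 0 hb
    · exact order_A b 0 hb
    · exact order_C b 0 0 hb
    · exact order_A b 1 hb
    · exact order_B b 1 hb
    · exact order_C b 1 0 hb
    · exact order_A b 2 hb
    · exact order_C b 0 1 hb
    · exact order_C b 2 0 hb
    · exact order_C b 1 1 hb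
    · exact order_C b 3 0 hb
    · exact order_C b 3 1 hb
  choose! p hp h2 h3 hord using hex
  refine covering_riesel b (by omega) 144 (by norm_num)
    {3, 4, 6, 8, 9, 12, 16, 18, 24, 36, 48, 144}
    (fun m => if m = 6 then 5 else if m = 8 then 2 else if m = 9 then 4 else
      if m = 12 then 7 else if m = 16 then 14 else if m = 18 then 7 else
      if m = 24 then 14 else if m = 36 then 1 else if m = 48 then 22 else
      if m = 144 then 55 else 0) p hp (by decide) (by decide) ?_ hord ?_
  · intro m hm hd
    have : (144 : ℕ) = 2 ^ 4 * 3 ^ 2 := by norm_num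
    rw [this] at hd
    rcases ((hp m hm).dvd_mul).1 hd with hh | hh
    · exact h2 m hm ((Nat.prime_dvd_prime_iff_eq (hp m hm) Nat.prime_two).1
        ((hp m hm).dvd_of_dvd_pow hh))
    · exact h3 m hm ((Nat.prime_dvd_prime_iff_eq (hp m hm) Nat.prime_three).1
        ((hp m hm).dvd_of_dvd_pow hh))
  · intro n
    simp only [Finset.mem_insert, Finset.mem_singleton, exists_eq_or_imp, exists_eq_left]
    norm_num
    have H : ∀ k < 144, k % 3 = 0 ∨ k % 4 = 0 ∨ k % 6 = 5 ∨ k % 8 = 2 ∨ k % 9 = 4 ∨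
        k % 12 = 7 ∨ k % 16 = 14 ∨ k % 18 = 7 ∨ k % 24 = 14 ∨ k % 36 = 1 ∨ k % 48 = 22 ∨
        k % 144 = 55 := by decide
    have H1 := H (n % 144) (Nat.mod_lt _ (by norm_num))
    have e : ∀ m : ℕ, m ∣ 144 → n % 144 % m = n % m := fun m hm => Nat.mod_mod_of_dvd n hm
    rw [e 3 (by norm_num), e 4 (by norm_num), e 6 (by norm_num), e 8 (by norm_num),
      e 9 (by norm_num), e 12 (by norm_num), e 16 (by norm_num), e 18 (by norm_num),
      e 24 (by norm_num), e 36 (by norm_num), e 48 (by norm_num), e 144 (by norm_num)] at H1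
    exact H1

lemma cullen_riesel_two :
    {t : ℕ | 0 < t ∧ IsBRiesel (2 : ℤ) ((t : ℤ) * (2 : ℤ) ^ t + 1)}.Infinite := by
  refine finish_riesel 2 le_rfl 241 _
    (infinite_class 24 1864135 23 240036 (by norm_num) (by norm_num) (by norm_num)) ?_ ?_
  · intro t _
    norm_num
    exact isCoprime_one_right
  · rintro t ⟨ht, ht'⟩ n
    have hcov : n % 2 = 1 ∨ n % 3 = 1 ∨ n % 4 = 2 ∨ n % 8 = 4 ∨ n % 12 = 8 ∨ n % 24 = 0 := by
      omega
    rcases hcov with h | h | h | h | h | h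
    · exact ⟨3, by norm_num, by norm_num, dvd_core 2 3 2 23 2 1 t n (by decide)
        (ht.of_dvd (by norm_num)) ((ht.of_dvd (by norm_num)).trans (by decide)) h (by norm_num [Int.ModEq])⟩
    · exact ⟨7, by norm_num, by norm_num, dvd_core 2 7 3 23 6 1 t n (by decide)
        (ht.of_dvd (by norm_num)) ((ht'.of_dvd (by norm_num)).trans (by decide)) h (by norm_num [Int.ModEq])⟩
    · exact ⟨5, by norm_num, by norm_num, dvd_core 2 5 4 23 1 2 t n (by decide)
        (ht.of_dvd (by norm_num)) ((ht'.of_dvd (by norm_num)).trans (by decide)) h (by norm_num [Int.ModEq])⟩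
    · exact ⟨17, by norm_num, by norm_num, dvd_core 2 17 8 23 13 4 t n (by decide)
        (ht.of_dvd (by norm_num)) ((ht'.of_dvd (by norm_num)).trans (by decide)) h (by norm_num [Int.ModEq])⟩
    · exact ⟨13, by norm_num, by norm_num, dvd_core 2 13 12 23 4 8 t n (by decide)
        (ht.of_dvd (by norm_num)) ((ht'.of_dvd (by norm_num)).trans (by decide)) h (by norm_num [Int.ModEq])⟩
    · exact ⟨241, by norm_num, by norm_num, dvd_core 2 241 24 23 0 0 t n (by decide)
        (ht.of_dvd (by norm_num)) ((ht'.of_dvd (by norm_num)).trans (by decide)) h (by norm_num [Int.ModEq])⟩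

theorem infinitely_many_cullen_b_riesel (b : ℤ) (hb : 2 ≤ b) :
    {t : ℕ | 0 < t ∧ IsBRiesel b ((t : ℤ) * b ^ t + 1)}.Infinite := by
  lift b to ℕ using (by omega)
  have hb' : 2 ≤ b := by exact_mod_cast hb
  rcases hb'.eq_or_lt with h | h
  · subst h
    exact cullen_riesel_two
  · exact cullen_riesel_ge_three b h
end

section
/- Let b ≥ 3 be an integer such that b + 1 is not a power of 2, and let α be a nonzero integer. Then there exist infinitely many positive integers t such that t·b^t + α is a b-Brier number. -/
/-- moduli of the covering -/
def brierModuli : Finset ℕ := {2, 3, 4, 6, 8, 9, 12, 18, 24, 27, 36, 54, 72, 108}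

/-- residues of the covering -/
def brierRes (n : ℕ) : ℕ :=
  if n = 2 then 0 else if n = 3 then 2 else if n = 4 then 2 else if n = 6 then 3
  else if n = 8 then 6 else if n = 9 then 7 else if n = 12 then 8 else if n = 18 then 13
  else if n = 24 then 10 else if n = 27 then 1 else if n = 36 then 19 else if n = 54 then 37
  else if n = 72 then 37 else 73

lemma brier_moduli_facts : ∀ n ∈ brierModuli, n ∣ 216 ∧ 2 ≤ n ∧ brierRes n < n := by decide

set_option maxRecDepth 100000 in
lemma brier_cover_R (m : ℕ) : ∃ n ∈ brierModuli, m % n = brierRes n := by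
  have key : ∀ m < 216, ∃ n ∈ brierModuli, m % n = brierRes n := by decide
  obtain ⟨n, hn, h⟩ := key (m % 216) (Nat.mod_lt _ (by norm_num))
  exact ⟨n, hn, by rwa [Nat.mod_mod_of_dvd _ (brier_moduli_facts n hn).1] at h⟩

set_option maxRecDepth 100000 in
lemma brier_cover_S (m : ℕ) :
    ∃ n ∈ brierModuli, 2 ∣ n ∧ (m + n / 2) % n = brierRes n := by
  have key : ∀ m < 216, ∃ n ∈ brierModuli, 2 ∣ n ∧ (m + n / 2) % n = brierRes n := by decide
  obtain ⟨n, hn, h2, h⟩ := key (m % 216) (Nat.mod_lt _ (by norm_num))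
  refine ⟨n, hn, h2, ?_⟩
  rw [Nat.add_mod, Nat.mod_mod_of_dvd _ (brier_moduli_facts n hn).1, ← Nat.add_mod] at h
  exact h

lemma exists_prime_sq_add_one (y : ℕ) (hy : 2 ≤ y) :
    ∃ p, p.Prime ∧ 2 < p ∧ p ∣ y ^ 2 + 1 := by
  rcases Nat.eq_two_pow_or_exists_odd_prime_and_dvd (y ^ 2 + 1) with ⟨k, hk⟩ | ⟨p, hp, hd, ho⟩
  · exfalso
    have h5 : 5 ≤ y ^ 2 + 1 := by nlinarith
    have hk2 : 2 ≤ k := by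
      by_contra h
      have : k ≤ 1 := by omega
      have := Nat.pow_le_pow_right (n := 2) (by norm_num) this
      omega
    obtain ⟨j, rfl⟩ := Nat.exists_eq_add_of_le hk2
    have h4 : (y ^ 2 + 1) % 4 = 0 := by
      rw [hk, pow_add]; simp
    have : y % 4 < 4 := Nat.mod_lt _ (by norm_num)
    rw [Nat.add_mod, Nat.pow_mod] at h4
    interval_cases h : y % 4 <;> simp at h4
  · refine ⟨p, hp, ?_, hd⟩
    have := hp.two_le
    rcases ho with ⟨c, hc⟩
    omega

lemma exists_prime_sq_add_add_one (y : ℕ) (hy : 2 ≤ y) :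
    ∃ p, p.Prime ∧ 3 < p ∧ p ∣ y ^ 2 + y + 1 := by
  by_contra hcon
  push Not at hcon
  have hodd : ¬ 2 ∣ y ^ 2 + y + 1 := by
    intro h
    have h0 := Nat.mod_eq_zero_of_dvd h
    have : y % 2 < 2 := Nat.mod_lt _ (by norm_num)
    rw [Nat.add_mod, Nat.add_mod (y ^ 2), Nat.pow_mod] at h0
    interval_cases h : y % 2 <;> simp at h0
  have h := Nat.eq_prime_pow_of_unique_prime_dvd (n := y ^ 2 + y + 1) (p := 3) (by positivity)
    (by
      intro d hd hdd
      by_contra hne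
      have h2 := hd.two_le
      have : d ≠ 2 := by rintro rfl; exact hodd hdd
      exact hcon d hd (by omega) hdd)
  set k := (y ^ 2 + y + 1).primeFactorsList.length
  have h7 : 7 ≤ y ^ 2 + y + 1 := by nlinarith
  have hk2 : 2 ≤ k := by
    by_contra h'
    have : k ≤ 1 := by omega
    have := Nat.pow_le_pow_right (n := 3) (by norm_num) this
    omega
  obtain ⟨j, hj⟩ := Nat.exists_eq_add_of_le hk2
  have h4 : (y ^ 2 + y + 1) % 9 = 0 := by
    rw [h, hj, pow_add]; simp
  have : y % 9 < 9 := Nat.mod_lt _ (by norm_num)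
  rw [Nat.add_mod, Nat.add_mod (y ^ 2), Nat.pow_mod] at h4
  interval_cases h : y % 9 <;> simp at h4

lemma zmod_nat_ne_zero {p : ℕ} (a : ℕ) (ha : 0 < a) (hp : a < p) : (a : ZMod p) ≠ 0 := by
  rw [Ne, ZMod.natCast_eq_zero_iff]
  exact fun h => absurd (Nat.le_of_dvd ha h) (by omega)

lemma prim_four (b m : ℕ) (hb : 3 ≤ b) (hm : 0 < m)
    (hq : ∀ q : ℕ, q.Prime → q ∣ 4 * m → q = 2) :
    ∃ p, p.Prime ∧ orderOf (b : ZMod p) = 4 * m := by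
  have hy : 2 ≤ b ^ m := le_trans (by omega) (Nat.le_self_pow hm.ne' b)
  obtain ⟨p, hp, hp2, hd⟩ := exists_prime_sq_add_one _ hy
  have := Fact.mk hp
  refine ⟨p, hp, ?_⟩
  have h2 := zmod_nat_ne_zero 2 (by norm_num) hp2
  have hz : ((b : ZMod p) ^ m) ^ 2 + 1 = 0 := by
    have := (ZMod.natCast_eq_zero_iff _ _).2 hd
    exact_mod_cast this
  push_cast at h2
  have hz' : (b : ZMod p) ^ (2 * m) = -1 := by
    rw [mul_comm, pow_mul]; linear_combination hz
  apply orderOf_eq_of_pow_and_pow_div_prime (by omega)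
  · rw [show 4 * m = 2 * m * 2 by ring, pow_mul, hz']; ring
  · intro q hqp hqd
    obtain rfl := hq q hqp hqd
    rw [show 4 * m / 2 = 2 * m by omega, hz']
    intro h
    apply h2
    linear_combination -h

lemma prim_three (b m : ℕ) (hb : 3 ≤ b) (hm : 0 < m)
    (hq : ∀ q : ℕ, q.Prime → q ∣ 3 * m → q = 3) :
    ∃ p, p.Prime ∧ orderOf (b : ZMod p) = 3 * m := by
  have hy : 2 ≤ b ^ m := le_trans (by omega) (Nat.le_self_pow hm.ne' b)
  obtain ⟨p, hp, hp2, hd⟩ := exists_prime_sq_add_add_one _ hy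
  have := Fact.mk hp
  refine ⟨p, hp, ?_⟩
  have h2 := zmod_nat_ne_zero 3 (by norm_num) hp2
  have hz : ((b : ZMod p) ^ m) ^ 2 + (b : ZMod p) ^ m + 1 = 0 := by
    have := (ZMod.natCast_eq_zero_iff _ _).2 hd
    exact_mod_cast this
  push_cast at h2
  apply orderOf_eq_of_pow_and_pow_div_prime (by omega)
  · rw [mul_comm, pow_mul]
    linear_combination ((b : ZMod p) ^ m - 1) * hz
  · intro q hqp hqd
    obtain rfl := hq q hqp hqd
    rw [show 3 * m / 3 = m by omega]
    intro h
    apply h2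
    rw [h] at hz
    linear_combination hz

lemma prim_six (b m : ℕ) (hb : 3 ≤ b) (hm : 0 < m)
    (hq : ∀ q : ℕ, q.Prime → q ∣ 6 * m → q = 2 ∨ q = 3) :
    ∃ p, p.Prime ∧ orderOf (b : ZMod p) = 6 * m := by
  have hy : 3 ≤ b ^ m := le_trans hb (Nat.le_self_pow hm.ne' b)
  obtain ⟨z, hzz⟩ := Nat.exists_eq_add_of_le' (show 1 ≤ b ^ m by omega)
  obtain ⟨p, hp, hp2, hd⟩ := exists_prime_sq_add_add_one z (by omega)
  have := Fact.mk hp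
  refine ⟨p, hp, ?_⟩
  have h3 := zmod_nat_ne_zero 3 (by norm_num) hp2
  have h2 := zmod_nat_ne_zero (p := p) 2 (by norm_num) (by omega)
  have hz : (z : ZMod p) ^ 2 + z + 1 = 0 := by
    have := (ZMod.natCast_eq_zero_iff _ _).2 hd
    exact_mod_cast this
  have hbz : (b : ZMod p) ^ m = z + 1 := by exact_mod_cast congrArg (Nat.cast (R := ZMod p)) hzz
  push_cast at h2 h3
  have hb3 : (b : ZMod p) ^ (3 * m) = -1 := by
    rw [mul_comm, pow_mul, hbz]
    linear_combination (z + 2 : ZMod p) * hz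
  apply orderOf_eq_of_pow_and_pow_div_prime (by omega)
  · rw [show 6 * m = 3 * m * 2 by ring, pow_mul, hb3]; ring
  · intro q hqp hqd
    rcases hq q hqp hqd with rfl | rfl
    · rw [show 6 * m / 2 = 3 * m by omega, hb3]
      intro h
      apply h2
      linear_combination -h
    · rw [show 6 * m / 3 = m * 2 by omega, pow_mul, hbz]
      intro h
      apply h3
      have h1 : (z : ZMod p) = 1 := by linear_combination h - hz
      rw [h1] at hz
      linear_combination hz

lemma prim_two (b : ℕ) (hb2 : ¬ ∃ n : ℕ, b + 1 = 2 ^ n) :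
    ∃ p, p.Prime ∧ orderOf (b : ZMod p) = 2 := by
  rcases Nat.eq_two_pow_or_exists_odd_prime_and_dvd (b + 1) with ⟨k, hk⟩ | ⟨p, hp, hd, ho⟩
  · exact absurd ⟨k, hk⟩ hb2
  · have := Fact.mk hp
    refine ⟨p, hp, ?_⟩
    have hp2 : 2 < p := by
      have := hp.two_le
      rcases ho with ⟨c, hc⟩
      omega
    have h2 := zmod_nat_ne_zero 2 (by norm_num) hp2
    push_cast at h2
    have hz : (b : ZMod p) = -1 := by
      have := (ZMod.natCast_eq_zero_iff _ _).2 hd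
      push_cast at this
      linear_combination this
    rw [hz]
    apply orderOf_eq_prime (by ring)
    intro h
    apply h2
    linear_combination -h

lemma prime_dvd_216 {q n : ℕ} (hq : q.Prime) (h : q ∣ n) (hn : n ∣ 216) : q = 2 ∨ q = 3 := by
  have h' : q ∣ 2 ^ 3 * 3 ^ 3 := h.trans (hn.trans (by norm_num))
  rcases hq.dvd_mul.1 h' with h1 | h1
  · exact Or.inl ((Nat.prime_dvd_prime_iff_eq hq Nat.prime_two).1 (hq.dvd_of_dvd_pow h1))
  · exact Or.inr ((Nat.prime_dvd_prime_iff_eq hq Nat.prime_three).1 (hq.dvd_of_dvd_pow h1))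

lemma prim_all (b : ℕ) (hb : 3 ≤ b) (hb2 : ¬ ∃ n : ℕ, b + 1 = 2 ^ n) (n : ℕ)
    (hn : n ∈ brierModuli) : ∃ p, p.Prime ∧ orderOf (b : ZMod p) = n := by
  have h216 := (brier_moduli_facts n hn).1
  have h6 : 6 ∣ n → ∃ p, p.Prime ∧ orderOf (b : ZMod p) = n := by
    rintro ⟨m, rfl⟩
    have := (brier_moduli_facts _ hn).2.1
    exact prim_six b m hb (by omega) (fun q hq hd => prime_dvd_216 hq hd h216)
  have h3 : n ∣ 27 → 3 ∣ n → ∃ p, p.Prime ∧ orderOf (b : ZMod p) = n := by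
    rintro hd ⟨m, rfl⟩
    have := (brier_moduli_facts _ hn).2.1
    refine prim_three b m hb (by omega) (fun q hq hqd => ?_)
    have : q ∣ 3 ^ 3 := hqd.trans hd
    exact (Nat.prime_dvd_prime_iff_eq hq Nat.prime_three).1 (hq.dvd_of_dvd_pow this)
  have h4 : n ∣ 8 → 4 ∣ n → ∃ p, p.Prime ∧ orderOf (b : ZMod p) = n := by
    rintro hd ⟨m, rfl⟩
    have := (brier_moduli_facts _ hn).2.1
    refine prim_four b m hb (by omega) (fun q hq hqd => ?_)
    have : q ∣ 2 ^ 3 := hqd.trans hd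
    exact (Nat.prime_dvd_prime_iff_eq hq Nat.prime_two).1 (hq.dvd_of_dvd_pow this)
  have hc : ∀ n ∈ brierModuli, n = 2 ∨ 6 ∣ n ∨ (n ∣ 27 ∧ 3 ∣ n) ∨ (n ∣ 8 ∧ 4 ∣ n) := by decide
  rcases hc n hn with rfl | h | h | h
  · exact prim_two b hb2
  · exact h6 h
  · exact h3 h.1 h.2
  · exact h4 h.1 h.2

lemma composite_of_dvd {p : ℕ} (hp : p.Prime) {m : ℤ} (hd : (p : ℤ) ∣ m) (hlt : (p : ℤ) < m) :
    IsComposite m := by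
  have h2 : (2 : ℤ) ≤ p := by exact_mod_cast hp.two_le
  refine ⟨by omega, fun hm => ?_⟩
  have hp' : Prime (p : ℤ) := Nat.prime_iff_prime_int.1 hp
  have h := (hp'.dvd_prime_iff_associated hm).1 hd
  rcases Int.associated_iff.1 h with h | h <;> omega

/-- Existence of a residue class of `t`. -/
lemma exists_class (b : ℕ) (hb : 3 ≤ b) (α : ℤ) (P : ℕ → ℕ)
    (hP : ∀ n ∈ brierModuli, (P n).Prime ∧ orderOf (b : ZMod (P n)) = n) :
    ∃ x Q : ℕ, 0 < Q ∧ ∀ t : ℕ, t ≡ x [MOD Q] →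
      ((b : ℤ) - 1 ∣ t + α) ∧
      ∀ n ∈ brierModuli, ((t : ZMod (P n)) * (b : ZMod (P n)) ^ t + (α : ZMod (P n))
        = (b : ZMod (P n)) ^ (n - brierRes n)) := by
  have h2m : 2 ∈ brierModuli := by decide
  obtain ⟨hp2, ho2⟩ := hP 2 h2m
  have hlt : ∀ n ∈ brierModuli, n < P n := by
    intro n hn
    obtain ⟨hp, ho⟩ := hP n hn
    have := Fact.mk hp
    have hn2 := (brier_moduli_facts n hn).2.1
    have hne : (b : ZMod (P n)) ≠ 0 := by
      intro h
      rw [h, orderOf_zero] at ho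
      omega
    have : orderOf (b : ZMod (P n)) ∣ P n - 1 :=
      orderOf_dvd_of_pow_eq_one (ZMod.pow_card_sub_one_eq_one hne)
    rw [ho] at this
    have := Nat.le_of_dvd (by have := hp.two_le; omega) this
    have := hp.two_le
    omega
  have hb1 : ∀ n ∈ brierModuli, ¬ P n ∣ b - 1 := by
    intro n hn hd
    obtain ⟨hp, ho⟩ := hP n hn
    have hn2 := (brier_moduli_facts n hn).2.1
    have h0 := (ZMod.natCast_eq_zero_iff _ _).2 hd
    rw [Nat.cast_sub (by omega)] at h0
    have : (b : ZMod (P n)) = 1 := by push_cast at h0; linear_combination h0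
    rw [this, orderOf_one] at ho
    omega
  have hinj : ∀ n ∈ brierModuli, ∀ m ∈ brierModuli, P n = P m → n = m := by
    intro n hn m hm h
    have h1 := (hP n hn).2
    have h2 := (hP m hm).2
    rw [← h1, ← h2, h]
  -- first step: modulo 2(b-1) and P 2
  have hcop1 : Nat.Coprime (2 * (b - 1)) (P 2) := by
    rw [Nat.coprime_comm, hp2.coprime_iff_not_dvd]
    intro h
    rcases hp2.dvd_mul.1 h with h | h
    · have := Nat.le_of_dvd (by norm_num) h
      have := hlt 2 h2m
      omega
    · exact hb1 2 h2m h
  -- a nonnegative representative of -α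
  obtain ⟨a, ha⟩ : ∃ a : ℕ, ((2 * (b - 1) : ℕ) : ℤ) ∣ a + α := by
    refine ⟨((-α) % ((2 * (b - 1) : ℕ) : ℤ)).toNat, ?_⟩
    have hpos : (0 : ℤ) < ((2 * (b - 1) : ℕ) : ℤ) := by
      have : 0 < 2 * (b - 1) := by omega
      exact_mod_cast this
    rw [Int.toNat_of_nonneg (Int.emod_nonneg _ hpos.ne')]
    have := Int.emod_add_mul_ediv (-α) ((2 * (b - 1) : ℕ) : ℤ)
    refine ⟨-((-α) / ((2 * (b - 1) : ℕ) : ℤ)), ?_⟩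
    linear_combination this
  -- solving for t modulo a prime
  have hsolve : ∀ n ∈ brierModuli, ∀ s : ℕ, ∃ c : ℕ,
      ((c : ZMod (P n)) * (b : ZMod (P n)) ^ s + (α : ZMod (P n))
        = (b : ZMod (P n)) ^ (n - brierRes n)) := by
    intro n hn s
    obtain ⟨hp, ho⟩ := hP n hn
    have := Fact.mk hp
    have hn2 := (brier_moduli_facts n hn).2.1
    have hne : (b : ZMod (P n)) ≠ 0 := by
      intro h
      rw [h, orderOf_zero] at ho
      omega
    obtain ⟨c, hc⟩ := ZMod.natCast_zmod_surjective
      (((b : ZMod (P n)) ^ (n - brierRes n) - (α : ZMod (P n))) * ((b : ZMod (P n)) ^ s)⁻¹)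
    refine ⟨c, ?_⟩
    rw [hc, mul_assoc, inv_mul_cancel₀ (pow_ne_zero _ hne)]
    ring
  have hpow : ∀ n ∈ brierModuli, ∀ s t : ℕ, s ≡ t [MOD n] →
      (b : ZMod (P n)) ^ s = (b : ZMod (P n)) ^ t := by
    intro n hn s t h
    rw [← pow_mod_orderOf (b : ZMod (P n)) s, (hP n hn).2, show s % n = t % n from h, 
      ← pow_mod_orderOf (b : ZMod (P n)) t, (hP n hn).2]
  obtain ⟨c2, hc2⟩ := hsolve 2 h2m a
  obtain ⟨t1, ht1a, ht1b⟩ := Nat.chineseRemainder hcop1 a c2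
  -- second step
  set M : ℕ := 2 * (b - 1) * P 2 * 216 with hM
  have hMpos : 0 < M := by
    have := hp2.pos
    have : 0 < b - 1 := by omega
    positivity
  have hcopM : ∀ n ∈ brierModuli.erase 2, Nat.Coprime (P n) M := by
    intro n hn
    obtain ⟨hn2, hn⟩ := Finset.mem_erase.1 hn
    obtain ⟨hp, ho⟩ := hP n hn
    have h3 : 3 < P n := by
      have := hlt n hn
      have := (brier_moduli_facts n hn).2.1
      omega
    rw [hp.coprime_iff_not_dvd]
    intro h
    have h216 : ¬ P n ∣ 216 := by
      intro h
      rcases prime_dvd_216 hp h dvd_rfl with h | h <;> omega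
    rcases hp.dvd_mul.1 h with h | h
    · rcases hp.dvd_mul.1 h with h | h
      · rcases hp.dvd_mul.1 h with h | h
        · exact h216 (h.trans (by norm_num))
        · exact hb1 n hn h
      · exact hn2 (hinj n hn 2 h2m ((Nat.prime_dvd_prime_iff_eq hp hp2).1 h))
    · exact h216 h
  choose! c hc using fun n hn => hsolve n hn t1
  obtain ⟨y, hy⟩ := Nat.chineseRemainderOfFinset c P (brierModuli.erase 2)
    (fun n hn => (hP n (Finset.mem_of_mem_erase hn)).1.ne_zero)
    (by
      intro n hn m hm hnm
      have hn' := Finset.mem_of_mem_erase hn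
      have hm' := Finset.mem_of_mem_erase hm
      exact (Nat.coprime_primes (hP n hn').1 (hP m hm').1).2
        (fun h => hnm (hinj n hn' m hm' h)))
  have hcopP : Nat.Coprime M (∏ n ∈ brierModuli.erase 2, P n) :=
    Nat.Coprime.prod_right (fun n hn => (hcopM n hn).symm)
  obtain ⟨x, hx1, hx2⟩ := Nat.chineseRemainder hcopP t1 y
  refine ⟨x, M * ∏ n ∈ brierModuli.erase 2, P n, ?_, ?_⟩
  · exact Nat.mul_pos hMpos (Finset.prod_pos fun n hn =>
      (hP n (Finset.mem_of_mem_erase hn)).1.pos)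
  intro t ht
  have htM : t ≡ t1 [MOD M] := (ht.of_mul_right _).trans hx1
  have hta : t ≡ a [MOD 2 * (b - 1)] :=
    (htM.of_dvd ⟨P 2 * 216, by rw [hM]; ring⟩).trans ht1a
  have ht216 : t ≡ t1 [MOD 216] := htM.of_dvd ⟨2 * (b - 1) * P 2, by rw [hM]; ring⟩
  refine ⟨?_, ?_⟩
  · have h1 : ((2 * (b - 1) : ℕ) : ℤ) ∣ a - t := (Nat.modEq_iff_dvd.1 hta)
    have h2 : ((2 * (b - 1) : ℕ) : ℤ) ∣ t + α := by
      have := dvd_sub ha h1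
      rwa [show (a : ℤ) + α - (a - t) = t + α by ring] at this
    refine dvd_trans ⟨2, ?_⟩ h2
    rw [Nat.cast_mul, Nat.cast_sub (by omega)]
    push_cast
    ring
  · intro n hn
    by_cases hn2 : n = 2
    · subst hn2
      have e1 : (t : ZMod (P 2)) = c2 := (ZMod.natCast_eq_natCast_iff _ _ _).2
        ((htM.of_dvd ⟨2 * (b - 1) * 216, by rw [hM]; ring⟩).trans ht1b)
      rw [e1, hpow 2 h2m t a (hta.of_mul_right _)]
      exact hc2
    · have hn' := Finset.mem_erase.2 ⟨hn2, hn⟩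
      have e1 : (t : ZMod (P n)) = c n := (ZMod.natCast_eq_natCast_iff _ _ _).2
        (((((ht.of_mul_left _).trans hx2).of_dvd (Finset.dvd_prod_of_mem P hn'))).trans (hy n hn'))
      rw [e1, hpow n hn t t1 (ht216.of_dvd (brier_moduli_facts n hn).1)]
      exact hc n hn

theorem infinitely_many_brier (b : ℤ) (hb : 3 ≤ b) (hb2 : ¬ ∃ n : ℕ, b + 1 = 2 ^ n)
    (α : ℤ) (hα : α ≠ 0) :
    {t : ℕ | 0 < t ∧ IsBBrier b ((t : ℤ) * b ^ t + α)}.Infinite := by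
  lift b to ℕ using by omega
  have hb' : 3 ≤ b := by exact_mod_cast hb
  have hb2' : ¬ ∃ n : ℕ, b + 1 = 2 ^ n := fun ⟨n, h⟩ => hb2 ⟨n, by exact_mod_cast h⟩
  choose! P hP using prim_all b hb' hb2'
  obtain ⟨x, Q, hQ, hclass⟩ := exists_class b hb' α P hP
  apply Set.infinite_of_forall_exists_gt
  intro T
  set t : ℕ := x + Q * (T + α.natAbs + (∑ n ∈ brierModuli, P n) + 1) with htdef
  have hle : T + α.natAbs + (∑ n ∈ brierModuli, P n) + 1 ≤ t :=
    (Nat.le_mul_of_pos_left _ hQ).trans (Nat.le_add_left _ _)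
  obtain ⟨hd, hk⟩ := hclass t (by simp [htdef, Nat.ModEq])
  refine ⟨t, ?_, by omega⟩
  have hbt : (1 : ℤ) ≤ (b : ℤ) ^ t := one_le_pow₀ (by omega)
  set k : ℤ := (t : ℤ) * (b : ℤ) ^ t + α with hkdef
  have htk : (t : ℤ) + α ≤ k := by nlinarith
  have hkP : ∀ n ∈ brierModuli, (P n : ℤ) < k := by
    intro n hn
    have : P n ≤ ∑ n ∈ brierModuli, P n :=
      Finset.single_le_sum (f := P) (fun _ _ => Nat.zero_le _) hn
    omega
  have hk0 : 0 < k := by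
    have := hkP 2 (by decide)
    omega
  -- divisibility of k by b-1
  have hkd : (b : ℤ) - 1 ∣ k := by
    have h1 : (b : ℤ) - 1 ∣ (b : ℤ) ^ t - 1 := by
      simpa using sub_dvd_pow_sub_pow (b : ℤ) 1 t
    have : k = t * ((b : ℤ) ^ t - 1) + (t + α) := by rw [hkdef]; ring
    rw [this]
    exact dvd_add (h1.mul_left _) hd
  have hbig : ∀ m : ℕ, 0 < m → 3 * k ≤ k * (b : ℤ) ^ m := by
    intro m hm
    have : (b : ℤ) ≤ (b : ℤ) ^ m := le_self_pow₀ (by omega) hm.ne'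
    nlinarith
  have hcast : ∀ n, ((k : ℤ) : ZMod (P n)) =
      (t : ZMod (P n)) * (b : ZMod (P n)) ^ t + (α : ZMod (P n)) := by
    intro n
    rw [hkdef]; push_cast; rfl
  have hmul : ∀ n ∈ brierModuli, ∀ m, m % n = brierRes n →
      ((k : ℤ) : ZMod (P n)) * (b : ZMod (P n)) ^ m = 1 := by
    intro n hn m hm
    obtain ⟨-, -, hr⟩ := brier_moduli_facts n hn
    rw [hcast, hk n hn, ← pow_add, ← orderOf_dvd_iff_pow_eq_one, (hP n hn).2]
    refine ⟨m / n + 1, ?_⟩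
    have := Nat.mod_add_div m n
    rw [mul_add]
    omega
  have hcopr : ∀ e : ℤ, IsUnit e → Int.gcd (k + e) ((b : ℤ) - 1) = 1 := by
    intro e he
    rw [← Int.isCoprime_iff_gcd_eq_one]
    obtain ⟨w, hw⟩ := hkd
    rw [hw, add_comm]
    exact (IsCoprime.add_mul_left_left_iff).2 ⟨e, 0, by rcases Int.isUnit_iff.1 he with rfl | rfl <;> norm_num⟩
  change 0 < t ∧ IsBBrier b k
  clear_value k
  refine ⟨by omega, ⟨hk0, hcopr 1 isUnit_one, ?_⟩, ⟨hk0, hcopr (-1) isUnit_one.neg, ?_⟩⟩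
  · intro m hm
    obtain ⟨n, hn, h2, h⟩ := brier_cover_S m
    obtain ⟨hp, ho⟩ := hP n hn
    have := Fact.mk hp
    refine composite_of_dvd hp ?_ ?_
    · rw [← ZMod.intCast_zmod_eq_zero_iff_dvd]
      have h1 := hmul n hn _ h
      obtain ⟨j, rfl⟩ := h2
      have hj := (brier_moduli_facts _ hn).2.1
      have hhalf : (b : ZMod (P (2 * j))) ^ j = -1 := by
        have hsq : ((b : ZMod (P (2 * j))) ^ j) ^ 2 = 1 := by
          rw [← pow_mul]
          exact orderOf_dvd_iff_pow_eq_one.1 (ho.dvd.trans (dvd_of_eq (mul_comm _ _)))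
        rcases (sq_eq_sq_iff_eq_or_eq_neg (b := (1 : ZMod (P (2 * j))))).1 (by rw [hsq, one_pow]) with h | h
        · exfalso
          rw [← orderOf_dvd_iff_pow_eq_one, ho] at h
          have := Nat.le_of_dvd (by omega) h
          omega
        · exact h
      rw [show 2 * j / 2 = j by omega, pow_add, hhalf] at h1
      push_cast
      linear_combination -h1
    · have := hkP n hn
      have := hbig m hm
      omega
  · intro m hm
    obtain ⟨n, hn, h⟩ := brier_cover_R m
    obtain ⟨hp, ho⟩ := hP n hn
    refine composite_of_dvd hp ?_ ?_
    · rw [← ZMod.intCast_zmod_eq_zero_iff_dvd]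
      have h1 := hmul n hn _ h
      push_cast
      linear_combination h1
    · have := hkP n hn
      have := hbig m hm
      omega
end
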